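/- arXiv:2303.03807 — 9 statements merged into one kernel-verified Lean document; each statement's English description precedes it below -/
import Mathlib

section
/- Let X be a totally disconnected compact metrizable space and let σ : X → X be a local homeomorphism. Then there exists a partition P of X such that for every Z ∈ P the restriction of σ to Z is injective (hence a homeomorphism onto its image), and moreover σ(Z) is a clopen subset of X for every Z ∈ P. -/
open Set

section Prelim

variable {X : Type*}

/-- A (finite clopen) partition of the space `X`: a finite family of nonempty, pairwise
disjoint clopen subsets of `X` whose union is `X`. -/
def IsClopenPartition [TopologicalSpace X] (P : Set (Set X)) : Prop :=
  P.Finite ∧ (∀ Z ∈ P, Z.Nonempty) ∧ (∀ Z ∈ P, IsClopen Z) ∧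
    P.PairwiseDisjoint id ∧ ⋃₀ P = Set.univ

/-- The cardinality of the fiber `σ⁻¹({x})`. -/
noncomputable def fiberCard (σ : X → X) (x : X) : ℕ :=
  (σ ⁻¹' {x}).ncard

/-- `U_{≥ k}`: the set of points with at least `k` preimages. -/
def fiberGE (σ : X → X) (k : ℕ) : Set X :=
  {x : X | k ≤ fiberCard σ x}

/-- `N(σ) = sup_{x ∈ X} |σ⁻¹({x})|`. -/
noncomputable def Nsigma (σ : X → X) : ℕ :=
  sSup (Set.range (fiberCard σ))

/-- The partition `P^σ`, whose members are the nonempty sets of the form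
`σ(Z₁) ∩ ⋯ ∩ σ(Z_k) \ U_{≥ k+1}` for pairwise distinct `Z₁, …, Z_k ∈ P` and
`1 ≤ k ≤ N(σ)`. -/
noncomputable def sigmaPart (σ : X → X) (P : Set (Set X)) : Set (Set X) :=
  {T | ∃ k : ℕ, 1 ≤ k ∧ k ≤ Nsigma σ ∧ ∃ Z : Fin k → Set X,
      (∀ j, Z j ∈ P) ∧ Function.Injective Z ∧
      T = (⋂ j, σ '' Z j) \ fiberGE σ (k + 1) ∧ T.Nonempty}

/-- The partition `σ⁻¹(P) = {σ⁻¹(Z) : Z ∈ P}`. -/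
def preimagePart (σ : X → X) (P : Set (Set X)) : Set (Set X) :=
  (fun Z => σ ⁻¹' Z) '' P

/-- `P₁ ≼ P₂`: `P₂` is finer than `P₁`, i.e. every member of `P₂` is contained in a
member of `P₁`. -/
def Finer (P₁ P₂ : Set (Set X)) : Prop :=
  ∀ Z ∈ P₂, ∃ Z' ∈ P₁, Z ⊆ Z'

/-- The wedge `P₁ ∨ P₂ = {Z₁ ∩ Z₂ ≠ ∅ : Z₁ ∈ P₁, Z₂ ∈ P₂}`. -/
def wedgePart (P₁ P₂ : Set (Set X)) : Set (Set X) :=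
  {T | ∃ Z₁ ∈ P₁, ∃ Z₂ ∈ P₂, T = Z₁ ∩ Z₂ ∧ T.Nonempty}

/-- A σ-refined sequence of partitions, with respect to a fixed distance function `d`
inducing the topology:  (a) `σ` is injective on each member of `P 0`; (b) each `P (n+1)`
refines `P n`; (c) `⋃ n, P n` generates the topology of `X`; (d) the diameters of the
members of `P n` tend to `0`; (e) `P (2j) ∨ P (2j)^σ ≼ P (2j+1)` and
`P (2j+1) ∨ σ⁻¹(P (2j+1)) ≼ P (2j+2)`. -/
noncomputable def IsSigmaRefinedSeq [t : TopologicalSpace X] (d : X → X → ℝ) (σ : X → X)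
    (P : ℕ → Set (Set X)) : Prop :=
  (∀ n, IsClopenPartition (P n)) ∧
  (∀ Z ∈ P 0, Set.InjOn σ Z) ∧
  (∀ n, Finer (P n) (P (n + 1))) ∧
  t = TopologicalSpace.generateFrom (⋃ n, P n) ∧
  (∀ ε : ℝ, 0 < ε → ∃ N : ℕ, ∀ n, N ≤ n → ∀ Z ∈ P n, ∀ x ∈ Z, ∀ y ∈ Z, d x y < ε) ∧
  (∀ j : ℕ, Finer (wedgePart (P (2 * j)) (sigmaPart σ (P (2 * j)))) (P (2 * j + 1))) ∧
  (∀ j : ℕ, Finer (wedgePart (P (2 * j + 1)) (preimagePart σ (P (2 * j + 1))))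
      (P (2 * j + 2)))

end Prelim

/-- Every local homeomorphism `σ` of a totally disconnected compact metrizable space `X`
admits a partition `P` of `X` such that `σ` is injective (hence a homeomorphism onto its
image) on each member of `P`, and `σ(Z)` is clopen for every `Z ∈ P`. -/
theorem stmt0 {X : Type*} [TopologicalSpace X] [CompactSpace X]
    [TopologicalSpace.MetrizableSpace X] [TotallyDisconnectedSpace X]
    (σ : X → X) (hσ : IsLocalHomeomorph σ) :
    ∃ P : Set (Set X), IsClopenPartition P ∧
      (∀ Z ∈ P, Set.InjOn σ Z) ∧ (∀ Z ∈ P, IsClopen (σ '' Z)) := by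
  have h : ∀ x : X, ∃ V : Set X, IsClopen V ∧ x ∈ V ∧ Set.InjOn σ V := by
    intro x
    obtain ⟨e, hx, he⟩ := hσ x
    obtain ⟨V, hV, hxV, hVe⟩ := compact_exists_isClopen_in_isOpen e.open_source hx
    refine ⟨V, hV, hxV, ?_⟩
    rw [he]
    exact e.injOn.mono hVe
  choose V hV hxV hinj using h
  obtain ⟨t, ht⟩ := isCompact_univ.elim_finite_subcover V (fun x => (hV x).isOpen)
    (fun x _ => Set.mem_iUnion.2 ⟨x, hxV x⟩)
  let f : X → (t → Prop) := fun x i => x ∈ V i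
  have hclopen : ∀ x, IsClopen (f ⁻¹' {f x}) := by
    intro x
    have : f ⁻¹' {f x} = ⋂ i : t, {y | y ∈ V i ↔ x ∈ V i} := by
      ext y
      simp [f, funext_iff]
    rw [this]
    refine isClopen_iInter_of_finite fun i => ?_
    by_cases hi : x ∈ V i
    · simpa [hi] using hV i
    · simp only [hi, iff_false]
      exact (hV i).compl
  have hinj' : ∀ x, Set.InjOn σ (f ⁻¹' {f x}) := by
    intro x
    obtain ⟨i, hi, hxi⟩ := Set.mem_iUnion₂.1 (ht (Set.mem_univ x))
    refine (hinj i).mono fun y hy => ?_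
    have h1 : (y ∈ V i) = (x ∈ V i) := congrFun (show f y = f x from hy) ⟨i, hi⟩
    rw [h1]
    exact hxi
  refine ⟨Set.range fun x => f ⁻¹' {f x}, ⟨?_, ?_, ?_, ?_, ?_⟩, ?_, ?_⟩
  · exact (Set.finite_range fun a : t → Prop => f ⁻¹' {a}).subset
      (by rintro _ ⟨x, rfl⟩; exact ⟨f x, rfl⟩)
  · rintro _ ⟨x, rfl⟩
    exact ⟨x, rfl⟩
  · rintro _ ⟨x, rfl⟩
    exact hclopen x
  · rintro _ ⟨x, rfl⟩ _ ⟨y, rfl⟩ hne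
    refine Set.disjoint_left.2 fun z hz hz' => hne ?_
    have h1 : f z = f x := hz
    have h2 : f z = f y := hz'
    simp only [← h1, ← h2]
  · exact Set.eq_univ_of_forall fun x => ⟨_, ⟨x, rfl⟩, rfl⟩
  · rintro _ ⟨x, rfl⟩
    exact hinj' x
  · rintro _ ⟨x, rfl⟩
    exact ⟨((hclopen x).isClosed.isCompact.image hσ.continuous).isClosed,
      hσ.isOpenMap _ (hclopen x).isOpen⟩
end

section
/- Let X be a totally disconnected compact metrizable space and let σ : X → X be a surjective local homeomorphism. Then for every i ≥ 1 the set U_{≥i} := {x ∈ X : |σ⁻¹({x})| ≥ i} is clopen in X. Consequently each set U_i := {x ∈ X : |σ⁻¹({x})| = i} is clopen, and the sets U_1, …, U_{N(σ)} are pairwise disjoint and cover X. -/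
open Set

/-- For a surjective local homeomorphism `σ` of a totally disconnected compact metrizable
space, each `U_{≥i} = {x : |σ⁻¹({x})| ≥ i}` (for `i ≥ 1`) is clopen; consequently each
`U_i = {x : |σ⁻¹({x})| = i}` is clopen, and `U_1, …, U_{N(σ)}` are pairwise disjoint and
cover `X`. -/
theorem stmt2 {X : Type*} [TopologicalSpace X] [CompactSpace X]
    [TopologicalSpace.MetrizableSpace X] [TotallyDisconnectedSpace X]
    (σ : X → X) (hσ : IsLocalHomeomorph σ) (hsurj : Function.Surjective σ) :
    (∀ i : ℕ, 1 ≤ i → IsClopen (fiberGE σ i)) ∧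
      (∀ i : ℕ, 1 ≤ i → IsClopen {x : X | fiberCard σ x = i}) ∧
      (∀ i j : ℕ, i ≠ j →
        Disjoint {x : X | fiberCard σ x = i} {x : X | fiberCard σ x = j}) ∧
      (⋃ i ∈ Finset.Icc 1 (Nsigma σ), {x : X | fiberCard σ x = i}) = Set.univ := by
  have hcov := isLocalHomeomorph_iff_isCoveringMap.mp hσ
  have hfin : ∀ x, (σ ⁻¹' {x}).Finite := by
    intro x
    have hd : DiscreteTopology (σ ⁻¹' {x}) := (hcov x).discreteTopology_fiber
    have hc : IsCompact (σ ⁻¹' {x}) := (isClosed_singleton.preimage hσ.continuous).isCompact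
    exact hc.finite ⟨hd⟩
  have hlc : IsLocallyConstant (fiberCard σ) := by
    rw [IsLocallyConstant.iff_eventually_eq]
    intro x
    obtain ⟨_, U, hxU, hU, -, H, hH⟩ := hcov x
    filter_upwards [hU.mem_nhds hxU] with y hy
    have key : ∀ z ∈ U, fiberCard σ z = Nat.card (σ ⁻¹' {x}) := by
      intro z hz
      unfold fiberCard
      rw [← Nat.card_coe_set_eq]
      refine Nat.card_congr
        ⟨fun e => (H ⟨e.1, by
            have h : σ e.1 = z := e.2
            simpa [h] using hz⟩).2,
         fun i => ⟨(H.symm (⟨z, hz⟩, i)).1, by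
            have h := hH (H.symm (⟨z, hz⟩, i))
            rw [H.apply_symm_apply] at h
            exact h.symm⟩, ?_, ?_⟩
      · rintro ⟨e, rfl⟩
        have h : H ⟨e, hz⟩ = (⟨σ e, hz⟩, (H ⟨e, hz⟩).2) :=
          Prod.ext (Subtype.ext (hH ⟨e, hz⟩)) rfl
        apply Subtype.ext
        show (H.symm (⟨σ e, hz⟩, (H ⟨e, hz⟩).2)).1 = e
        rw [← h, H.symm_apply_apply]
      · intro i
        simp
    rw [key y hy, key x hxU]
  have hbdd : BddAbove (Set.range (fiberCard σ)) := hlc.range_finite.bddAbove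
  refine ⟨fun i _ => ⟨⟨hlc (Set.Ici i)ᶜ⟩, hlc (Set.Ici i)⟩,
    fun i _ => ⟨⟨hlc {i}ᶜ⟩, hlc {i}⟩, ?_, ?_⟩
  · intro i j hij
    rw [Set.disjoint_left]
    intro x hx hx'
    exact hij (hx.symm.trans hx')
  · rw [Set.eq_univ_iff_forall]
    intro x
    simp only [Set.mem_iUnion, Finset.mem_Icc, Set.mem_ofPred_eq]
    refine ⟨fiberCard σ x, ⟨?_, le_csSup hbdd ⟨x, rfl⟩⟩, rfl⟩
    exact (Set.ncard_pos (hfin x)).mpr (hsurj x)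
end

section
/- Let X be a totally disconnected compact metrizable space, σ : X → X a surjective local homeomorphism, and P a partition of X such that σ is injective on each element of P. Then P^σ is a partition of X: its elements are nonempty, pairwise disjoint clopen subsets of X whose union is X. -/
open Set

def cells {X : Type*} (σ : X → X) (P : Set (Set X)) (x : X) : Set (Set X) :=
  {Z | Z ∈ P ∧ x ∈ σ '' Z}

theorem ncard_cells {X : Type*} [TopologicalSpace X] (σ : X → X)
    (P : Set (Set X)) (hP : IsClopenPartition P)
    (hinj : ∀ Z ∈ P, Set.InjOn σ Z) (x : X) :
    (cells σ P x).ncard = fiberCard σ x := by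
  obtain ⟨hfin, hne, hcl, hdis, hun⟩ := hP
  have hc : ∀ y : X, ∃ Z, Z ∈ P ∧ y ∈ Z := by
    intro y
    have : y ∈ ⋃₀ P := by rw [hun]; trivial
    obtain ⟨Z, h1, h2⟩ := this
    exact ⟨Z, h1, h2⟩
  choose c hcP hcy using hc
  have himg : cells σ P x = c '' (σ ⁻¹' {x}) := by
    ext Z
    constructor
    · rintro ⟨hZ, y, hy, rfl⟩
      refine ⟨y, rfl, ?_⟩
      exact hdis.elim_set (hcP y) hZ y (hcy y) hy
    · rintro ⟨y, hy, rfl⟩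
      exact ⟨hcP y, y, hcy y, hy⟩
  rw [himg, fiberCard]
  apply Set.ncard_image_of_injOn
  intro a ha b hb hab
  have hb' := hcy b
  rw [← hab] at hb'
  exact hinj _ (hcP a) (hcy a) hb' (ha.trans hb.symm)

theorem part_eq {X : Type*} [TopologicalSpace X] (σ : X → X)
    (P : Set (Set X)) (hP : IsClopenPartition P)
    (hinj : ∀ Z ∈ P, Set.InjOn σ Z) (k : ℕ) (Z : Fin k → Set X)
    (hZ : ∀ j, Z j ∈ P) (hZi : Function.Injective Z) :
    (⋂ j, σ '' Z j) \ fiberGE σ (k + 1) = {y | cells σ P y = Set.range Z} := by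
  have hk : (Set.range Z).ncard = k := by
    rw [← Set.image_univ, Set.ncard_image_of_injective _ hZi, Set.ncard_univ, Nat.card_fin]
  ext y
  have hf : (cells σ P y).Finite := hP.1.subset (fun _ h => h.1)
  simp only [Set.mem_diff, Set.mem_iInter, fiberGE, Set.mem_setOf_eq,
    ← ncard_cells σ P hP hinj y]
  constructor
  · rintro ⟨h1, h2⟩
    refine (Set.eq_of_subset_of_ncard_le ?_ ?_ hf).symm
    · rintro _ ⟨j, rfl⟩
      exact ⟨hZ j, h1 j⟩
    · omega
  · intro h
    rw [h, hk]
    refine ⟨fun j => ?_, by omega⟩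
    have : Z j ∈ cells σ P y := by rw [h]; exact ⟨j, rfl⟩
    exact this.2

/-- `P^σ` is a partition of `X`: its members are nonempty, pairwise disjoint clopen
subsets of `X` whose union is `X`. -/
theorem stmt4 {X : Type*} [TopologicalSpace X] [CompactSpace X]
    [TopologicalSpace.MetrizableSpace X] [TotallyDisconnectedSpace X]
    (σ : X → X) (hσ : IsLocalHomeomorph σ) (hsurj : Function.Surjective σ)
    (P : Set (Set X)) (hP : IsClopenPartition P)
    (hinj : ∀ Z ∈ P, Set.InjOn σ Z) :
    IsClopenPartition (sigmaPart σ P) := by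
  have hP' := hP
  obtain ⟨hfin, hne, hcl, hdis, hun⟩ := hP'
  have key : ∀ T ∈ sigmaPart σ P, ∃ A, A ⊆ P ∧ T = {y | cells σ P y = A} := by
    rintro T ⟨k, -, -, Z, hZ, hZi, rfl, -⟩
    exact ⟨Set.range Z, by rintro _ ⟨j, rfl⟩; exact hZ j, part_eq σ P hP hinj k Z hZ hZi⟩
  refine ⟨?_, ?_, ?_, ?_, ?_⟩
  · refine (hfin.finite_subsets.image (fun A => {y | cells σ P y = A})).subset ?_
    intro T hT
    obtain ⟨A, hA, rfl⟩ := key T hT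
    exact ⟨A, hA, rfl⟩
  · rintro T ⟨k, -, -, Z, hZ, hZi, -, h⟩
    exact h
  · intro T hT
    obtain ⟨A, hA, rfl⟩ := key T hT
    have himg : ∀ Z ∈ P, IsClopen (σ '' Z) := fun Z hZ =>
      ⟨((hcl Z hZ).isClosed.isCompact.image hσ.continuous).isClosed,
        hσ.isOpenMap _ (hcl Z hZ).isOpen⟩
    have : {y | cells σ P y = A} = ⋂ Z ∈ P, {y | y ∈ σ '' Z ↔ Z ∈ A} := by
      ext y
      simp only [Set.mem_setOf_eq, Set.mem_iInter]
      constructor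
      · rintro rfl Z hZ
        exact ⟨fun h => ⟨hZ, h⟩, fun h => h.2⟩
      · intro h
        ext Z
        exact ⟨fun hZ => (h Z hZ.1).1 hZ.2, fun hZ => ⟨hA hZ, (h Z (hA hZ)).2 hZ⟩⟩
    rw [this]
    refine hfin.isClopen_biInter fun Z hZ => ?_
    by_cases hZA : Z ∈ A
    · convert himg Z hZ using 1
      ext y
      exact iff_true_right hZA
    · convert (himg Z hZ).compl using 1
      ext y
      exact iff_false_right hZA
  · intro T hT T' hT' hTT'
    obtain ⟨A, hA, rfl⟩ := key T hT
    obtain ⟨B, hB, rfl⟩ := key T' hT'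
    refine Set.disjoint_left.2 fun y (h1 : _ = A) (h2 : _ = B) => hTT' ?_
    rw [← h1, ← h2]
  · refine Set.eq_univ_of_forall fun x => ?_
    have hf : (cells σ P x).Finite := hfin.subset (fun _ h => h.1)
    have := hf.to_subtype
    let e := Finite.equivFin (cells σ P x)
    let Z : Fin (Nat.card (cells σ P x)) → Set X := fun j => (e.symm j).1
    have hZ : ∀ j, Z j ∈ P := fun j => (e.symm j).2.1
    have hZi : Function.Injective Z := Subtype.val_injective.comp e.symm.injective
    have hr : cells σ P x = Set.range Z := by
      ext W
      constructor
      · intro hW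
        exact ⟨e ⟨W, hW⟩, congrArg Subtype.val (e.symm_apply_apply ⟨W, hW⟩)⟩
      · rintro ⟨j, rfl⟩
        exact (e.symm j).2
    have hx : x ∈ (⋂ j, σ '' Z j) \ fiberGE σ (Nat.card (cells σ P x) + 1) := by
      rw [part_eq σ P hP hinj _ Z hZ hZi]
      exact hr
    refine ⟨_, ⟨Nat.card (cells σ P x), ?_, ?_, Z, hZ, hZi, rfl, ⟨x, hx⟩⟩, hx⟩
    · obtain ⟨y, rfl⟩ := hsurj x
      have hy : y ∈ ⋃₀ P := by rw [hun]; trivial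
      obtain ⟨W, h1, h2⟩ := hy
      have : Nonempty (cells σ P (σ y)) := ⟨⟨W, h1, y, h2, rfl⟩⟩
      exact Nat.card_pos
    · refine le_csSup ⟨P.ncard, ?_⟩ ⟨x, ?_⟩
      · rintro _ ⟨z, rfl⟩
        rw [← ncard_cells σ P hP hinj z]
        exact Set.ncard_le_ncard (fun _ h => h.1) hfin
      · rw [← ncard_cells σ P hP hinj x]
        rfl
end

section
/- Let X be a totally disconnected compact metrizable space and σ : X → X a surjective local homeomorphism. Then X admits a σ-refined sequence of partitions. -/
open Set

section Helpers

variable {X : Type*}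

/-- Every point has a neighbourhood in the family. -/
def NbhdCover [TopologicalSpace X] (C : Set (Set X)) : Prop :=
  ∀ x : X, ∃ T ∈ C, T ∈ nhds x

theorem NbhdCover.wedge [TopologicalSpace X] {C D : Set (Set X)} (hC : NbhdCover C)
    (hD : NbhdCover D) : NbhdCover (wedgePart C D) := by
  intro x
  obtain ⟨S, hS, hSx⟩ := hC x
  obtain ⟨T, hT, hTx⟩ := hD x
  exact ⟨S ∩ T, ⟨S, hS, T, hT, rfl, ⟨x, mem_of_mem_nhds hSx, mem_of_mem_nhds hTx⟩⟩,
    Filter.inter_mem hSx hTx⟩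

theorem Finer.of_wedge_left {C D Q : Set (Set X)} (h : Finer (wedgePart C D) Q) : Finer C Q := by
  intro Z hZ
  obtain ⟨T, ⟨A, hA, B, hB, rfl, _⟩, hZT⟩ := h Z hZ
  exact ⟨A, hA, hZT.trans inter_subset_left⟩

theorem Finer.of_wedge_right {C D Q : Set (Set X)} (h : Finer (wedgePart C D) Q) :
    Finer D Q := by
  intro Z hZ
  obtain ⟨T, ⟨A, hA, B, hB, rfl, _⟩, hZT⟩ := h Z hZ
  exact ⟨B, hB, hZT.trans inter_subset_right⟩

theorem IsClopenPartition.nbhdCover [TopologicalSpace X] {P : Set (Set X)}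
    (hP : IsClopenPartition P) : NbhdCover P := by
  intro x
  have hx : x ∈ ⋃₀ P := by rw [hP.2.2.2.2]; trivial
  obtain ⟨Z, hZ, hxZ⟩ := hx
  exact ⟨Z, hZ, (hP.2.2.1 Z hZ).isOpen.mem_nhds hxZ⟩

theorem NbhdCover.preimage [TopologicalSpace X] {P : Set (Set X)} {σ : X → X}
    (hσ : Continuous σ) (hP : NbhdCover P) : NbhdCover (preimagePart σ P) := by
  intro x
  obtain ⟨Z, hZ, hx⟩ := hP (σ x)
  exact ⟨σ ⁻¹' Z, ⟨Z, hZ, rfl⟩, hσ.continuousAt hx⟩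

theorem exists_partition [TopologicalSpace X] [T2Space X] [CompactSpace X]
    [TotallyDisconnectedSpace X] {C : Set (Set X)} (hC : NbhdCover C) :
    ∃ Q, IsClopenPartition Q ∧ Finer C Q := by
  have h1 : ∀ x : X, ∃ V : Set X, IsClopen V ∧ x ∈ V ∧ ∃ T ∈ C, V ⊆ T := by
    intro x
    obtain ⟨T, hT, hTx⟩ := hC x
    obtain ⟨U, hUT, hU, hxU⟩ := mem_nhds_iff.1 hTx
    obtain ⟨V, hV, hxV, hVU⟩ := compact_exists_isClopen_in_isOpen hU hxU
    exact ⟨V, hV, hxV, T, hT, hVU.trans hUT⟩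
  choose V hV hxV hVC using h1
  obtain ⟨s, hs⟩ := isCompact_univ.elim_finite_subcover V (fun x => (hV x).isOpen)
    (fun x _ => mem_iUnion.2 ⟨x, hxV x⟩)
  let f : X → Set s := fun x => {i | x ∈ V i}
  have hf : ∀ A : Set s, IsClopen (f ⁻¹' {A}) := by
    intro A
    have : f ⁻¹' {A} = ⋂ i : s, {x | x ∈ V i ↔ i ∈ A} := by
      ext x
      simp [f, Set.ext_iff]
    rw [this]
    refine isClopen_iInter_of_finite fun i => ?_
    by_cases hi : i ∈ A
    · simpa [hi] using hV i
    · simp only [hi, iff_false]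
      exact (hV i).compl
  refine ⟨range (fun x => f ⁻¹' {f x}), ⟨?_, ?_, ?_, ?_, ?_⟩, ?_⟩
  · exact (Set.finite_range (fun A : Set s => f ⁻¹' {A})).subset
      (by rintro _ ⟨x, rfl⟩; exact ⟨f x, rfl⟩)
  · rintro _ ⟨x, rfl⟩; exact ⟨x, rfl⟩
  · rintro _ ⟨x, rfl⟩; exact hf _
  · rintro _ ⟨x, rfl⟩ _ ⟨y, rfl⟩ hne
    refine Set.disjoint_left.2 fun z hz hz' => hne ?_
    have e1 : f z = f x := hz
    have e2 : f z = f y := hz'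
    simp only [← e1, ← e2]
  · exact eq_univ_of_forall fun x => ⟨_, ⟨x, rfl⟩, rfl⟩
  · rintro _ ⟨x, rfl⟩
    obtain ⟨i, hi, hxi⟩ := mem_iUnion₂.1 (hs (mem_univ x))
    obtain ⟨T, hT, hVT⟩ := hVC i
    refine ⟨T, hT, fun y hy => hVT ?_⟩
    have e : f y = f x := hy
    have : (⟨i, hi⟩ : s) ∈ f y := by rw [e]; exact hxi
    exact this

theorem fiberCard_eq {P : Set (Set X)} [TopologicalSpace X] (hP : IsClopenPartition P)
    {σ : X → X} (hinj : ∀ Z ∈ P, InjOn σ Z) (x : X) :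
    fiberCard σ x = {Z ∈ P | x ∈ σ '' Z}.ncard := by
  have hmem : ∀ y : X, ∃ Z ∈ P, y ∈ Z := by
    intro y
    have hx : y ∈ ⋃₀ P := by rw [hP.2.2.2.2]; trivial
    exact hx
  choose g hg hyg using hmem
  have huniq : ∀ y, ∀ Z ∈ P, y ∈ Z → g y = Z := by
    intro y Z hZ hy
    by_contra hne
    exact Set.disjoint_left.1 (hP.2.2.2.1 (hg y) hZ hne) (hyg y) hy
  refine Set.ncard_congr (fun y _ => g y) ?_ ?_ ?_
  · intro y hy
    exact ⟨hg y, y, hyg y, hy⟩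
  · intro y z hy hz h
    refine hinj _ (hg y) (hyg y) (by rw [h]; exact hyg z) ?_
    exact Eq.trans hy (Eq.symm hz)
  · rintro Z ⟨hZ, y, hy, hyx⟩
    exact ⟨y, hyx, huniq y Z hZ hy⟩

theorem sigma_nbhdCover [TopologicalSpace X] [T2Space X] [CompactSpace X] {P : Set (Set X)}
    (hP : IsClopenPartition P) {σ : X → X} (hσ : IsLocalHomeomorph σ)
    (hsurj : Function.Surjective σ) (hinj : ∀ Z ∈ P, InjOn σ Z) :
    NbhdCover (sigmaPart σ P) := by
  intro x
  let F : X → Set (Set X) := fun x => {Z ∈ P | x ∈ σ '' Z}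
  have hFfin : ∀ y, (F y).Finite := fun y => hP.1.subset (sep_subset _ _)
  have hcard : ∀ y, fiberCard σ y = (F y).ncard := fiberCard_eq hP hinj
  have hev : ∀ᶠ y in nhds x, F y = F x := by
    have : ∀ᶠ y in nhds x, ∀ Z ∈ P, (y ∈ σ '' Z ↔ x ∈ σ '' Z) := by
      rw [Filter.eventually_all_finite hP.1]
      intro Z hZ
      have hop : IsOpen (σ '' Z) := hσ.isOpenMap _ (hP.2.2.1 Z hZ).isOpen
      have hcl : IsClosed (σ '' Z) :=
        ((hP.2.2.1 Z hZ).isClosed.isCompact.image hσ.continuous).isClosed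
      by_cases h : x ∈ σ '' Z
      · filter_upwards [hop.mem_nhds h] with y hy
        exact ⟨fun _ => h, fun _ => hy⟩
      · filter_upwards [hcl.isOpen_compl.mem_nhds h] with y hy
        exact ⟨fun h' => absurd h' hy, fun h' => absurd h' h⟩
    filter_upwards [this] with y hy
    ext Z
    exact ⟨fun h => ⟨h.1, (hy Z h.1).1 h.2⟩, fun h => ⟨h.1, (hy Z h.1).2 h.2⟩⟩
  have hpos : 1 ≤ (F x).ncard := by
    refine (Set.ncard_pos (hFfin x)).2 ?_
    obtain ⟨y, hy⟩ := hsurj x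
    obtain ⟨Z, hZ, hyZ⟩ := hP.nbhdCover y
    exact ⟨Z, hZ, y, mem_of_mem_nhds hyZ, hy⟩
  have hle : (F x).ncard ≤ Nsigma σ := by
    rw [← hcard]
    refine le_csSup ⟨P.ncard, ?_⟩ ⟨x, rfl⟩
    rintro _ ⟨y, rfl⟩
    rw [hcard]
    exact Set.ncard_le_ncard (sep_subset _ _) hP.1
  have : Finite (F x) := hFfin x
  have e : Fin (F x).ncard ≃ F x := (Finite.equivFinOfCardEq rfl).symm
  have hsub : {y | F y = F x} ⊆ (⋂ j, σ '' (e j : Set X)) \ fiberGE σ ((F x).ncard + 1) := by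
    intro y hy
    have hy : F y = F x := hy
    refine ⟨mem_iInter.2 fun j => ?_, ?_⟩
    · have : (e j : Set X) ∈ F y := by rw [hy]; exact (e j).2
      exact this.2
    · intro h
      have h' : (F x).ncard + 1 ≤ fiberCard σ y := h
      rw [hcard, hy] at h'
      omega
  exact ⟨_, ⟨(F x).ncard, hpos, hle, fun j => e j, fun j => (e j).2.1,
    Subtype.val_injective.comp e.injective, rfl, ⟨x, hsub rfl⟩⟩, Filter.mem_of_superset hev hsub⟩

theorem dist_nbhdCover [MetricSpace X] {ε : ℝ} (hε : 0 < ε) :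
    NbhdCover {T : Set X | ∀ x ∈ T, ∀ y ∈ T, dist x y < ε} := by
  intro x
  refine ⟨Metric.ball x (ε / 2), ?_, Metric.ball_mem_nhds x (by positivity)⟩
  intro y hy z hz
  have h1 := Metric.mem_ball.1 hy
  have h2 := Metric.mem_ball'.1 hz
  linarith [dist_triangle y x z]

end Helpers

/-- Every surjective local homeomorphism of a totally disconnected compact metric space
admits a σ-refined sequence of partitions. -/
theorem stmt6 {X : Type*} [MetricSpace X] [CompactSpace X] [TotallyDisconnectedSpace X]
    (σ : X → X) (hσ : IsLocalHomeomorph σ) (hsurj : Function.Surjective σ) :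
    ∃ P : ℕ → Set (Set X), IsSigmaRefinedSeq dist σ P := by
  have step : ∀ (n : ℕ) (P : {P : Set (Set X) // IsClopenPartition P ∧ ∀ Z ∈ P, InjOn σ Z}),
      ∃ Q : {P : Set (Set X) // IsClopenPartition P ∧ ∀ Z ∈ P, InjOn σ Z},
        Finer (wedgePart P.1 (sigmaPart σ P.1)) Q.1 ∧
        Finer (wedgePart P.1 (preimagePart σ P.1)) Q.1 ∧
        ∀ Z ∈ Q.1, ∀ x ∈ Z, ∀ y ∈ Z, dist x y < 1 / ((n : ℝ) + 1) := by
    rintro n ⟨P, hP, hinj⟩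
    have c1 := hP.nbhdCover.wedge (sigma_nbhdCover hP hσ hsurj hinj)
    have c2 := hP.nbhdCover.wedge (hP.nbhdCover.preimage hσ.continuous)
    have c3 := dist_nbhdCover (X := X) (Nat.one_div_pos_of_nat (α := ℝ) (n := n))
    obtain ⟨Q, hQ, hf⟩ := exists_partition ((c1.wedge c2).wedge c3)
    have f1 := hf.of_wedge_left.of_wedge_left
    refine ⟨⟨Q, hQ, ?_⟩, f1, hf.of_wedge_left.of_wedge_right, ?_⟩
    · intro Z hZ
      obtain ⟨A, hA, hZA⟩ := f1.of_wedge_left Z hZ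
      exact (hinj A hA).mono hZA
    · intro Z hZ x hx y hy
      obtain ⟨A, hA, hZA⟩ := hf.of_wedge_right Z hZ
      exact hA x (hZA hx) y (hZA hy)
  have c0 : NbhdCover {T : Set X | InjOn σ T} := by
    intro x
    obtain ⟨e, hx, rfl⟩ := hσ x
    exact ⟨e.source, e.injOn, e.open_source.mem_nhds hx⟩
  obtain ⟨P0, hP0, hf0⟩ := exists_partition c0
  have hinj0 : ∀ Z ∈ P0, InjOn σ Z := by
    intro Z hZ
    obtain ⟨A, hA, hZA⟩ := hf0 Z hZ
    exact InjOn.mono hZA hA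
  choose next h1 h2 h3 using step
  let P : ℕ → {P : Set (Set X) // IsClopenPartition P ∧ ∀ Z ∈ P, InjOn σ Z} :=
    fun n => Nat.rec ⟨P0, hP0, hinj0⟩ next n
  have hd : ∀ ε : ℝ, 0 < ε → ∃ N : ℕ, ∀ n, N ≤ n → ∀ Z ∈ (P n).1, ∀ x ∈ Z, ∀ y ∈ Z,
      dist x y < ε := by
    intro ε hε
    obtain ⟨N, hN⟩ := exists_nat_one_div_lt hε
    refine ⟨N + 1, fun n hn Z hZ x hx y hy => ?_⟩
    obtain ⟨m, rfl⟩ : ∃ m, n = m + 1 := ⟨n - 1, by omega⟩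
    refine ((h3 m (P m) Z hZ x hx y hy).trans_le ?_).trans hN
    exact Nat.one_div_le_one_div (by omega)
  refine ⟨fun n => (P n).1, fun n => (P n).2.1, hinj0, fun n => (h1 n (P n)).of_wedge_left, ?_,
    hd, fun j => h1 _ (P (2 * j)), fun j => h2 _ (P (2 * j + 1))⟩
  refine (TopologicalSpace.isTopologicalBasis_of_isOpen_of_nhds ?_ ?_).eq_generateFrom
  · intro U hU
    obtain ⟨n, hn⟩ := mem_iUnion.1 hU
    exact ((P n).2.1.2.2.1 U hn).isOpen
  · intro x U hx hU
    obtain ⟨ε, hε, hb⟩ := Metric.isOpen_iff.1 hU x hx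
    obtain ⟨N, hN⟩ := hd ε hε
    obtain ⟨Z, hZ, hxZ⟩ := (P N).2.1.nbhdCover x
    have hxZ := mem_of_mem_nhds hxZ
    exact ⟨Z, mem_iUnion.2 ⟨N, hZ⟩, hxZ, fun y hy => hb (hN N le_rfl Z hZ y hy x hxZ)⟩
end

section
/- Let X be a totally disconnected compact metrizable space, σ : X → X a surjective local homeomorphism, and {P_n}_{n≥0} a σ-refined sequence of partitions of X. Let (m_n)_{n≥0} be a strictly increasing sequence of nonnegative integers with m₀ even and m_{n+1} − m_n odd for every n. Then {P_{m_n}}_{n≥0} is again a σ-refined sequence of partitions of X. -/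
open Set

theorem finer_trans_aux {X : Type*} {A B C : Set (Set X)} (h1 : Finer A B) (h2 : Finer B C) :
    Finer A C := by
  intro Z hZ
  obtain ⟨W, hW, hZW⟩ := h2 Z hZ
  obtain ⟨V, hV, hWV⟩ := h1 W hW
  exact ⟨V, hV, hZW.trans hWV⟩

theorem finer_le_aux {X : Type*} {P : ℕ → Set (Set X)} (h : ∀ n, Finer (P n) (P (n + 1)))
    {a b : ℕ} (hab : a ≤ b) : Finer (P a) (P b) := by
  induction hab with
  | refl => exact fun Z hZ => ⟨Z, hZ, Subset.rfl⟩
  | step _ ih => exact finer_trans_aux ih (h _)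

/-- Telescoping a σ-refined sequence of partitions along a strictly increasing sequence
`(m n)` with `m 0` even and all successive differences odd yields again a σ-refined
sequence of partitions. -/
theorem stmt7 {X : Type*} [MetricSpace X] [CompactSpace X] [TotallyDisconnectedSpace X]
    (σ : X → X) (hσ : IsLocalHomeomorph σ) (hsurj : Function.Surjective σ)
    (P : ℕ → Set (Set X)) (hP : IsSigmaRefinedSeq dist σ P)
    (m : ℕ → ℕ) (hmono : StrictMono m) (h0 : Even (m 0))
    (hodd : ∀ n, Odd (m (n + 1) - m n)) :
    IsSigmaRefinedSeq dist σ (fun n => P (m n)) := by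
  obtain ⟨hp, ha, hb, hc, hd, he1, he2⟩ := hP
  have hle : ∀ n, n ≤ m n := fun n => hmono.le_apply
  have hpar : ∀ j, Even (m (2 * j)) ∧ Odd (m (2 * j + 1)) := by
    have step : ∀ n, (Even (m n) ↔ Odd (m (n + 1))) := by
      intro n
      have h1 := hodd n
      have h2 : m n < m (n + 1) := hmono (Nat.lt_succ_self n)
      rw [Nat.odd_iff] at *
      rw [Nat.even_iff]
      omega
    intro j
    induction j with
    | zero => exact ⟨h0, (step 0).1 h0⟩
    | succ j ih =>
      have h1 : Even (m (2 * (j + 1))) := by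
        have := step (2 * j + 1)
        rw [← Nat.not_even_iff_odd] at this
        have h3 := ih.2
        rw [← Nat.not_even_iff_odd] at h3
        exact not_not.1 (fun h => h3 (this.2 h))
      exact ⟨h1, (step _).1 h1⟩
  refine ⟨fun n => hp _, ?_, ?_, ?_, ?_, ?_, ?_⟩
  · intro Z hZ
    obtain ⟨W, hW, hZW⟩ := finer_le_aux hb (Nat.zero_le (m 0)) Z hZ
    exact (ha W hW).mono hZW
  · intro n
    exact finer_le_aux hb (hmono (Nat.lt_succ_self n)).le
  · apply le_antisymm
    · apply le_generateFrom
      intro Z hZ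
      obtain ⟨n, hn⟩ := mem_iUnion.1 hZ
      exact ((hp (m n)).2.2.1 Z hn).isOpen
    · conv_rhs => rw [hc]
      apply le_generateFrom
      intro Z hZ
      obtain ⟨n, hn⟩ := mem_iUnion.1 hZ
      have hZe : Z = ⋃₀ {W | W ∈ P (m n) ∧ W ⊆ Z} := by
        apply Subset.antisymm
        · intro x hx
          have hx' : x ∈ ⋃₀ P (m n) := by rw [(hp (m n)).2.2.2.2]; trivial
          obtain ⟨W, hW, hxW⟩ := hx'
          obtain ⟨V, hV, hWV⟩ := finer_le_aux hb (hle n) W hW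
          have hVZ : V = Z := (hp n).2.2.2.1.elim_set hV hn x (hWV hxW) hx
          exact ⟨W, ⟨hW, hVZ ▸ hWV⟩, hxW⟩
        · exact sUnion_subset fun W hW => hW.2
      rw [hZe]
      apply TopologicalSpace.GenerateOpen.sUnion
      intro W hW
      exact TopologicalSpace.GenerateOpen.basic _ (mem_iUnion.2 ⟨n, hW.1⟩)
  · intro ε hε
    obtain ⟨N, hN⟩ := hd ε hε
    exact ⟨N, fun n hn => hN _ (hn.trans (hle n))⟩
  · intro j
    have hlt : m (2 * j) < m (2 * j + 1) := hmono (Nat.lt_succ_self _)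
    obtain ⟨i, hi⟩ := (hpar j).1
    have hi' : m (2 * j) = 2 * i := by omega
    have := he1 i
    rw [← hi'] at this
    exact finer_trans_aux this (finer_le_aux hb hlt)
  · intro j
    have hlt : m (2 * j + 1) < m (2 * j + 2) := hmono (Nat.lt_succ_self _)
    obtain ⟨i, hi⟩ := (hpar j).2
    have := he2 i
    have e : 2 * i + 2 = m (2 * j + 1) + 1 := by omega
    rw [e, ← hi] at this
    exact finer_trans_aux this (finer_le_aux hb hlt)
end

section
/- Let X be a totally disconnected compact metrizable space, σ : X → X a surjective local homeomorphism, and {P_n}_{n≥0} a σ-refined sequence of partitions of X. Let j ≥ 0, Z₁ ∈ P_{2j} and Z ∈ P_{2j+1} with Z ⊆ σ(Z₁). Then every Z'' ∈ P_{2j+2} is either contained in or disjoint from σ⁻¹(Z) ∩ Z₁, so σ⁻¹(Z) ∩ Z₁ is the disjoint union of those Z'' ∈ P_{2j+2} contained in it; moreover Z is the disjoint union of the sets σ(Z'') over those Z'' ∈ P_{2j+2} with Z'' ⊆ σ⁻¹(Z) ∩ Z₁. -/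
open Set

/-- Lemma (group of `f`'s), part (i): with `Z₁ ∈ P (2j)`, `Z ∈ P (2j+1)` and
`Z ⊆ σ(Z₁)`, every member of `P (2j+2)` is contained in or disjoint from
`σ⁻¹(Z) ∩ Z₁`; moreover `σ⁻¹(Z) ∩ Z₁` is the (disjoint) union of the members of
`P (2j+2)` contained in it, and `Z` is the disjoint union of their images under `σ`. -/
theorem stmt12 {X : Type*} [MetricSpace X] [CompactSpace X] [TotallyDisconnectedSpace X]
    (σ : X → X) (hσ : IsLocalHomeomorph σ) (hsurj : Function.Surjective σ)
    (P : ℕ → Set (Set X)) (hP : IsSigmaRefinedSeq dist σ P)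
    (j : ℕ) (Z₁ Z : Set X) (hZ₁ : Z₁ ∈ P (2 * j)) (hZ : Z ∈ P (2 * j + 1))
    (hsub : Z ⊆ σ '' Z₁) :
    (∀ Z'' ∈ P (2 * j + 2), Z'' ⊆ σ ⁻¹' Z ∩ Z₁ ∨ Disjoint Z'' (σ ⁻¹' Z ∩ Z₁)) ∧
      σ ⁻¹' Z ∩ Z₁ = ⋃₀ {W | W ∈ P (2 * j + 2) ∧ W ⊆ σ ⁻¹' Z ∩ Z₁} ∧
      Z = (⋃ W ∈ {W | W ∈ P (2 * j + 2) ∧ W ⊆ σ ⁻¹' Z ∩ Z₁}, σ '' W) ∧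
      ∀ W₁ ∈ {W | W ∈ P (2 * j + 2) ∧ W ⊆ σ ⁻¹' Z ∩ Z₁},
        ∀ W₂ ∈ {W | W ∈ P (2 * j + 2) ∧ W ⊆ σ ⁻¹' Z ∩ Z₁},
          W₁ ≠ W₂ → Disjoint (σ '' W₁) (σ '' W₂) := by
  obtain ⟨hpart, hinj0, hfin, -, -, -, hpre⟩ := hP
  have hinj : ∀ n, ∀ W ∈ P n, Set.InjOn σ W := by
    intro n
    induction n with
    | zero => exact hinj0
    | succ n ih =>
      intro W hW
      obtain ⟨W', hW', hs⟩ := hfin n W hW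
      exact (ih W' hW').mono hs
  have huniq : ∀ n, ∀ A ∈ P n, ∀ B ∈ P n, ∀ x, x ∈ A → x ∈ B → A = B := by
    intro n A hA B hB x hxA hxB
    by_contra hne
    exact Set.disjoint_left.mp ((hpart n).2.2.2.1 hA hB hne) hxA hxB
  have hcov : ∀ n x, ∃ W ∈ P n, x ∈ W := by
    intro n x
    have : x ∈ ⋃₀ P n := by rw [(hpart n).2.2.2.2]; trivial
    exact this
  have key : ∀ W ∈ P (2 * j + 2), ∀ x ∈ W, x ∈ σ ⁻¹' Z ∩ Z₁ → W ⊆ σ ⁻¹' Z ∩ Z₁ := by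
    intro W hW x hxW hx
    obtain ⟨T, ⟨A, hA, B, ⟨C, hC, rfl⟩, rfl, -⟩, hs⟩ := hpre j W hW
    obtain ⟨D, hD, hAD⟩ := hfin (2 * j) A hA
    have h1 : C = Z := huniq _ C hC Z hZ (σ x) (hs hxW).2 hx.1
    have h2 : D = Z₁ := huniq _ D hD Z₁ hZ₁ x (hAD (hs hxW).1) hx.2
    subst h1 h2
    intro y hy
    exact ⟨(hs hy).2, hAD (hs hy).1⟩
  refine ⟨?_, ?_, ?_, ?_⟩
  · intro W hW
    by_cases h : ∃ x ∈ W, x ∈ σ ⁻¹' Z ∩ Z₁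
    · obtain ⟨x, hx, hx'⟩ := h
      exact Or.inl (key W hW x hx hx')
    · right
      rw [Set.disjoint_left]
      intro x hx hx'
      exact h ⟨x, hx, hx'⟩
  · ext x
    constructor
    · intro hx
      obtain ⟨W, hW, hxW⟩ := hcov (2 * j + 2) x
      exact ⟨W, ⟨hW, key W hW x hxW hx⟩, hxW⟩
    · rintro ⟨W, ⟨-, hs⟩, hxW⟩
      exact hs hxW
  · ext z
    simp only [Set.mem_iUnion]
    constructor
    · intro hz
      obtain ⟨x, hx, rfl⟩ := hsub hz
      obtain ⟨W, hW, hxW⟩ := hcov (2 * j + 2) x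
      exact ⟨W, ⟨hW, key W hW x hxW ⟨hz, hx⟩⟩, x, hxW, rfl⟩
    · rintro ⟨W, ⟨-, hs⟩, x, hxW, rfl⟩
      exact (hs hxW).1
  · rintro W₁ ⟨h₁, hs₁⟩ W₂ ⟨h₂, hs₂⟩ hne
    rw [Set.disjoint_left]
    rintro _ ⟨x, hx, rfl⟩ ⟨y, hy, hxy⟩
    have : y = x := hinj _ Z₁ hZ₁ (hs₂ hy).2 (hs₁ hx).2 hxy
    subst this
    exact hne (huniq _ W₁ h₁ W₂ h₂ y hx hy)
end

section
/- Let X be a totally disconnected compact metrizable space, σ : X → X a surjective local homeomorphism, and {P_n}_{n≥0} a σ-refined sequence of partitions of X. Let j ≥ 1, and let Z ∈ P_{2j−1}, Z'' ∈ P_{2j+1} and Z₁ ∈ P_{2j−2} be such that Z'' ⊆ Z ⊆ σ(Z₁). Then there exists a unique Z' ∈ P_{2j} such that Z' ⊆ Z₁ and Z'' ⊆ σ(Z') ⊆ Z. -/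
open Set

theorem part_eq_s13 {X : Type*} [TopologicalSpace X] {P : Set (Set X)} (h : IsClopenPartition P)
    {A B : Set X} (hA : A ∈ P) (hB : B ∈ P) {x : X} (hxA : x ∈ A) (hxB : x ∈ B) : A = B := by
  by_contra hne
  exact Set.disjoint_left.1 (h.2.2.2.1 hA hB hne) hxA hxB

theorem part_cover {X : Type*} [TopologicalSpace X] {P : Set (Set X)} (h : IsClopenPartition P)
    (x : X) : ∃ A ∈ P, x ∈ A := by
  have : x ∈ ⋃₀ P := by rw [h.2.2.2.2]; trivial
  exact this

theorem part_finer {X : Type*} [TopologicalSpace X] {P Q : Set (Set X)}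
    (h : IsClopenPartition P) (hf : Finer P Q)
    {A B : Set X} (hA : A ∈ P) (hB : B ∈ Q) {x : X} (hxA : x ∈ A) (hxB : x ∈ B) : B ⊆ A := by
  obtain ⟨C, hC, hBC⟩ := hf B hB
  rw [part_eq_s13 h hA hC hxA (hBC hxB)]
  exact hBC

theorem fiber_mem {X : Type*} [TopologicalSpace X] {P : Set (Set X)} (h : IsClopenPartition P)
    (σ : X → X) (hinj : ∀ A ∈ P, Set.InjOn σ A) (k : ℕ) (W : Fin k → Set X)
    (hW : ∀ i, W i ∈ P) (hWi : Function.Injective W) (x : X)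
    (hy : σ x ∈ (⋂ i, σ '' W i) \ fiberGE σ (k + 1)) : ∃ i, x ∈ W i := by
  by_contra! hno
  apply hy.2
  have hfin : (σ ⁻¹' {σ x}).Finite := by
    have : σ ⁻¹' {σ x} ⊆ ⋃ A ∈ P, (A ∩ σ ⁻¹' {σ x}) := by
      intro z hz
      obtain ⟨A, hA, hzA⟩ := part_cover h z
      exact Set.mem_biUnion hA ⟨hzA, hz⟩
    refine Set.Finite.subset (h.1.biUnion ?_) this
    intro A hA
    apply Set.Subsingleton.finite
    intro a ha b hb
    exact hinj A hA ha.1 hb.1 (ha.2.trans hb.2.symm)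
  have hx : ∀ i, ∃ z, z ∈ W i ∧ σ z = σ x := fun i => Set.mem_iInter.1 hy.1 i
  choose f hf hfx using hx
  have hfi : Function.Injective f := by
    intro a b hab
    apply hWi
    exact part_eq_s13 h (hW a) (hW b) (hf a) (hab ▸ hf b)
  have hxr : x ∉ Set.range f := by
    rintro ⟨i, rfl⟩
    exact hno i (hf i)
  have hsub : insert x (Set.range f) ⊆ σ ⁻¹' {σ x} := by
    rintro z (rfl | ⟨i, rfl⟩)
    · rfl
    · exact hfx i
  have hc := Set.ncard_le_ncard hsub hfin
  rw [Set.ncard_insert_of_notMem hxr (Set.finite_range f), ← Set.image_univ,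
    Set.ncard_image_of_injective _ hfi, Set.ncard_univ, Nat.card_fin] at hc
  exact hc

/-- Lemma (group of `f`'s), part (ii): if `j ≥ 1`, `Z ∈ P (2j−1)`, `Z'' ∈ P (2j+1)` and
`Z₁ ∈ P (2j−2)` satisfy `Z'' ⊆ Z ⊆ σ(Z₁)`, then there is a unique `Z' ∈ P (2j)` with
`Z' ⊆ Z₁` and `Z'' ⊆ σ(Z') ⊆ Z`. -/
theorem stmt13 {X : Type*} [MetricSpace X] [CompactSpace X] [TotallyDisconnectedSpace X]
    (σ : X → X) (hσ : IsLocalHomeomorph σ) (hsurj : Function.Surjective σ)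
    (P : ℕ → Set (Set X)) (hP : IsSigmaRefinedSeq dist σ P)
    (j : ℕ) (hj : 1 ≤ j) (Z Z'' Z₁ : Set X)
    (hZ : Z ∈ P (2 * j - 1)) (hZ'' : Z'' ∈ P (2 * j + 1)) (hZ₁ : Z₁ ∈ P (2 * j - 2))
    (h1 : Z'' ⊆ Z) (h2 : Z ⊆ σ '' Z₁) :
    ∃! Z' : Set X, Z' ∈ P (2 * j) ∧ Z' ⊆ Z₁ ∧ Z'' ⊆ σ '' Z' ∧ σ '' Z' ⊆ Z := by
  obtain ⟨i, rfl⟩ : ∃ i, j = i + 1 := ⟨j - 1, by omega⟩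
  obtain ⟨hp, hinj0, hfin, -, -, hs, hpre⟩ := hP
  have e1 : 2 * (i + 1) - 1 = 2 * i + 1 := by omega
  have e2 : 2 * (i + 1) - 2 = 2 * i := by omega
  rw [e1] at hZ
  rw [e2] at hZ₁
  have hinj : ∀ n, ∀ A ∈ P n, Set.InjOn σ A := by
    intro n
    induction n with
    | zero => exact hinj0
    | succ n ih =>
      intro A hA
      obtain ⟨B, hB, hAB⟩ := hfin n A hA
      exact (ih B hB).mono hAB
  obtain ⟨y, hy⟩ := (hp _).2.1 Z'' hZ''
  obtain ⟨x, hx, rfl⟩ := h2 (h1 hy)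
  obtain ⟨Z', hZ', hxZ'⟩ := part_cover (hp (2 * (i + 1))) x
  refine ⟨Z', ⟨hZ', ?_, ?_, ?_⟩, ?_⟩
  · obtain ⟨B, hB, hAB⟩ := hfin (2 * i + 1) Z' hZ'
    exact hAB.trans (part_finer (hp _) (hfin (2 * i)) hZ₁ hB hx (hAB hxZ'))
  · obtain ⟨T, ⟨A, hA, S, ⟨k, -, -, W, hW, hWi, rfl, -⟩, rfl, -⟩, hT⟩ := hs (i + 1) Z'' hZ''
    obtain ⟨l, hl⟩ := fiber_mem (hp _) σ (hinj _) k W hW hWi x (hT hy).2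
    rw [part_eq_s13 (hp _) hZ' (hW l) hxZ' hl]
    intro z hz
    exact Set.mem_iInter.1 (hT hz).2.1 l
  · obtain ⟨T, ⟨A, hA, S, ⟨B, hB, rfl⟩, rfl, -⟩, hT⟩ := hpre i Z' hZ'
    have hBZ : B = Z := part_eq_s13 (hp _) hB hZ (hT hxZ').2 (h1 hy)
    rintro _ ⟨z, hz, rfl⟩
    rw [← hBZ]
    exact (hT hz).2
  · rintro V ⟨hV, hV1, hV2, -⟩
    obtain ⟨x', hx', he⟩ := hV2 hy
    have : x' = x := hinj _ Z₁ hZ₁ (hV1 hx') hx he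
    subst this
    exact part_eq_s13 (hp _) hV hZ' hx' hxZ'
end

section
/- Let X be a totally disconnected compact metrizable space and σ : X → X a surjective local homeomorphism. Then (X,σ) admits a σ-cylinder decomposition. -/
/-- Every surjective local homeomorphism `σ` of a totally disconnected compact metrizable
space `X` admits a σ-cylinder decomposition: a finite index set `Γ` partitioned into `n`
nonempty pieces (encoded by a surjection `ι : Γ → Fin n`), nonempty pairwise disjoint
compact open sets `Z γ` covering `X`, and nonempty compact open sets `V γ i k`
(`k < a γ i`) such that `V i := ⋃_{ι γ = i} Z γ` decomposes as the disjoint union of the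
`V γ i k`, and `σ` restricts to an injection of `V γ i k` onto `Z γ`. -/
theorem stmt14 {X : Type*} [TopologicalSpace X] [CompactSpace X]
    [TopologicalSpace.MetrizableSpace X] [TotallyDisconnectedSpace X]
    (σ : X → X) (hσ : IsLocalHomeomorph σ) (hsurj : Function.Surjective σ) :
    ∃ (n : ℕ) (Γ : Type) (_ : Fintype Γ) (ι : Γ → Fin n) (Z : Γ → Set X)
      (a : Γ → Fin n → ℕ) (V : (γ : Γ) → (i : Fin n) → Fin (a γ i) → Set X),
      Function.Surjective ι ∧
      (∀ γ, (Z γ).Nonempty ∧ IsCompact (Z γ) ∧ IsOpen (Z γ)) ∧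
      Pairwise (fun γ γ' => Disjoint (Z γ) (Z γ')) ∧
      (⋃ γ, Z γ) = Set.univ ∧
      (∀ γ i k, (V γ i k).Nonempty ∧ IsCompact (V γ i k) ∧ IsOpen (V γ i k)) ∧
      (∀ i : Fin n, (⋃ γ ∈ {γ | ι γ = i}, Z γ) = ⋃ γ, ⋃ k, V γ i k) ∧
      (∀ (i : Fin n) (γ γ' : Γ) (k : Fin (a γ i)) (k' : Fin (a γ' i)),
        (γ, (k : ℕ)) ≠ (γ', (k' : ℕ)) → Disjoint (V γ i k) (V γ' i k')) ∧
      (∀ γ i k, Set.InjOn σ (V γ i k) ∧ σ '' V γ i k = Z γ) := by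
  classical
  have hcov : ∀ x : X, ∃ C : Set X, IsClopen C ∧ x ∈ C ∧ Set.InjOn σ C := by
    intro x
    obtain ⟨e, hx, rfl⟩ := hσ x
    obtain ⟨C, hC, hxC, hCe⟩ := compact_exists_isClopen_in_isOpen e.open_source hx
    exact ⟨C, hC, hxC, e.injOn.mono hCe⟩
  choose C hC hxC hinj using hcov
  obtain ⟨t, ht⟩ := isCompact_univ.elim_finite_subcover C (fun x => (hC x).isOpen)
    (fun x _ => Set.mem_iUnion.2 ⟨x, hxC x⟩)
  obtain ⟨m, U, hU, hUinj, hUcov, hUdisj⟩ : ∃ (m : ℕ) (U : Fin m → Set X),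
      (∀ j, IsClopen (U j)) ∧ (∀ j, Set.InjOn σ (U j)) ∧ (∀ x, ∃ j, x ∈ U j) ∧
      (∀ i j x, x ∈ U i → x ∈ U j → i = j) := by
    let f : Fin t.card → X := fun j => (t.equivFin.symm j : X)
    refine ⟨t.card, fun j => C (f j) \ ⋃ i ∈ {i | i < j}, C (f i), ?_, ?_, ?_, ?_⟩
    · intro j
      exact (hC _).diff ((Set.toFinite _).isClopen_biUnion (fun i _ => hC _))
    · intro j
      exact (hinj _).mono Set.diff_subset
    · intro x
      have hx : ∃ j, x ∈ C (f j) := by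
        obtain ⟨y, hy, hxy⟩ := Set.mem_iUnion₂.1 (ht (Set.mem_univ x))
        exact ⟨t.equivFin ⟨y, hy⟩, by simpa [f] using hxy⟩
      obtain ⟨j, hj, hmin⟩ := WellFounded.has_min (wellFounded_lt (α := Fin t.card))
        {j | x ∈ C (f j)} hx
      refine ⟨j, hj, ?_⟩
      simp only [Set.mem_iUnion, not_exists]
      intro i hi hxi
      exact hmin i hxi hi
    · rintro i j x ⟨h1, h2⟩ ⟨h3, h4⟩
      simp only [Set.mem_iUnion, not_exists, Set.mem_setOf_eq] at h2 h4
      rcases lt_trichotomy i j with h | h | h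
      · exact (h4 i h h1).elim
      · exact h
      · exact (h2 j h h3).elim
  have hcont : Continuous σ := hσ.continuous
  have hI : ∀ j, IsClopen (σ '' U j) := fun j =>
    ⟨((hU j).isClosed.isCompact.image hcont).isClosed, hσ.isOpenMap _ (hU j).isOpen⟩
  let A : Finset (Fin m) → Set X := fun S => {y | ∀ j, j ∈ S ↔ y ∈ σ '' U j}
  have hA : ∀ S, IsClopen (A S) := by
    intro S
    have : A S = ⋂ j, (if j ∈ S then σ '' U j else (σ '' U j)ᶜ) := by
      ext y
      simp only [A, Set.mem_setOf_eq, Set.mem_iInter]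
      refine forall_congr' fun j => ?_
      by_cases h : j ∈ S <;> simp [h]
    rw [this]
    refine isClopen_iInter_of_finite fun j => ?_
    split_ifs
    · exact hI j
    · exact (hI j).compl
  have hAcov : ∀ y, ∃ S, y ∈ A S := fun y =>
    ⟨Finset.univ.filter (fun j => y ∈ σ '' U j), fun j => by simp⟩
  have hAdisj : ∀ S T y, y ∈ A S → y ∈ A T → S = T := by
    intro S T y h1 h2
    ext j
    rw [h1 j, h2 j]
  rcases isEmpty_or_nonempty X with hX | ⟨⟨x₀⟩⟩
  · refine ⟨0, Empty, inferInstance, fun e => e.elim, fun e => e.elim, fun e => e.elim,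
      fun e => e.elim, fun i => i.elim0, fun e => e.elim, fun e => e.elim, ?_,
      fun e => e.elim, fun i => i.elim0, fun i => i.elim0, fun e => e.elim⟩
    exact Subsingleton.elim _ _
  let g : (S : Finset (Fin m)) → Fin S.card → Fin m := fun S k => (S.equivFin.symm k : Fin m)
  have hg : ∀ S k, g S k ∈ S := fun S k => (S.equivFin.symm k).2
  have himg : ∀ S k, σ '' (U (g S k) ∩ σ ⁻¹' A S) = A S := by
    intro S k
    rw [Set.image_inter_preimage]
    exact Set.inter_eq_right.2 fun y hy => (hy _).1 (hg S k)
  refine ⟨1, {S : Finset (Fin m) // (A S).Nonempty}, inferInstance, fun _ => 0,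
    fun S => A S.1, fun S _ => S.1.card, fun S _ k => U (g S.1 k) ∩ σ ⁻¹' A S.1,
    ?_, ?_, ?_, ?_, ?_, ?_, ?_, ?_⟩
  · intro i
    obtain ⟨S, hS⟩ := hAcov x₀
    exact ⟨⟨S, x₀, hS⟩, Subsingleton.elim _ _⟩
  · exact fun S => ⟨S.2, (hA _).isClosed.isCompact, (hA _).isOpen⟩
  · intro S T hST
    exact Set.disjoint_left.2 fun y h1 h2 => hST (Subtype.ext (hAdisj _ _ y h1 h2))
  · refine Set.eq_univ_of_forall fun y => ?_
    obtain ⟨S, hS⟩ := hAcov y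
    exact Set.mem_iUnion.2 ⟨⟨S, y, hS⟩, hS⟩
  · intro S i k
    have hc := (hU (g S.1 k)).inter ((hA S.1).preimage hcont)
    refine ⟨?_, hc.isClosed.isCompact, hc.isOpen⟩
    have h := S.2
    rw [← himg S.1 k] at h
    exact h.of_image
  · intro i
    ext x
    simp only [Set.mem_iUnion]
    constructor
    · intro _
      obtain ⟨S, hS⟩ := hAcov (σ x)
      obtain ⟨j, hj⟩ := hUcov x
      have hjS : j ∈ S := (hS j).2 ⟨x, hj, rfl⟩
      refine ⟨⟨S, σ x, hS⟩, S.equivFin ⟨j, hjS⟩, ?_, hS⟩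
      simpa [g] using hj
    · intro _
      obtain ⟨S, hS⟩ := hAcov x
      exact ⟨⟨S, x, hS⟩, Subsingleton.elim _ _, hS⟩
  · intro i S T k k' hne
    refine Set.disjoint_left.2 ?_
    rintro x ⟨h1, h2⟩ ⟨h3, h4⟩
    have hST : S = T := Subtype.ext (hAdisj _ _ _ h2 h4)
    subst hST
    have := hUdisj _ _ _ h1 h3
    have hk : k = k' := S.1.equivFin.symm.injective (Subtype.ext this)
    exact hne (by rw [hk])
  · intro S i k
    exact ⟨(hUinj _).mono Set.inter_subset_left, himg _ _⟩
end

section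
/- Let X be a totally disconnected compact metrizable space and σ : X → X a surjective local homeomorphism. Then σ is a covering map: every point of X has an open neighborhood U such that σ⁻¹(U) is a disjoint union of open subsets of X, each of which is mapped homeomorphically onto U by σ. -/
/-- Every surjective local homeomorphism `σ` of a totally disconnected compact metrizable
space is a covering map: every point has an open neighborhood `U` whose preimage is a
disjoint union of open sets, each of which is mapped homeomorphically onto `U` by `σ`. -/
theorem stmt15 {X : Type*} [TopologicalSpace X] [CompactSpace X]
    [TopologicalSpace.MetrizableSpace X] [TotallyDisconnectedSpace X]
    (σ : X → X) (hσ : IsLocalHomeomorph σ) (hsurj : Function.Surjective σ) :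
    ∀ y : X, ∃ U : Set X, IsOpen U ∧ y ∈ U ∧
      ∃ (ι : Type) (W : ι → Set X),
        (∀ i, IsOpen (W i)) ∧
        Pairwise (fun i j => Disjoint (W i) (W j)) ∧
        σ ⁻¹' U = ⋃ i, W i ∧
        ∀ i, ∃ e : PartialHomeomorph X X,
          e.source = W i ∧ e.target = U ∧ Set.EqOn σ ⇑e (W i) := by
  classical
  intro y
  have hcov : IsCoveringMap σ := isLocalHomeomorph_iff_isCoveringMap.mp hσ
  have hc : Continuous σ := hσ.continuous
  obtain ⟨hd, U, hyU, hU, hfU, H, hH⟩ := hcov y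
  have hcomp : CompactSpace (σ ⁻¹' {y}) :=
    isCompact_iff_compactSpace.mp (isClosed_singleton.preimage hc).isCompact
  have hfin : Finite (σ ⁻¹' {y}) := finite_of_compact_of_discrete
  obtain ⟨n, ⟨k⟩⟩ := Finite.exists_equiv_fin (σ ⁻¹' {y})
  refine ⟨U, hU, hyU, Fin n, fun i => Subtype.val '' {e : σ ⁻¹' U | (H e).2 = k.symm i},
    ?_, ?_, ?_, ?_⟩
  · intro i
    refine hfU.isOpenMap_subtype_val _ ?_
    exact (isOpen_discrete {k.symm i}).preimage (continuous_snd.comp H.continuous)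
  · intro i j hij
    rw [Set.disjoint_left]
    rintro _ ⟨e, he, rfl⟩ ⟨e', he', h⟩
    obtain rfl := Subtype.ext h
    exact hij (k.symm.injective (he.symm.trans he'))
  · ext x
    simp only [Set.mem_iUnion]
    constructor
    · intro hx
      exact ⟨k (H ⟨x, hx⟩).2, ⟨x, hx⟩, by simp, rfl⟩
    · rintro ⟨i, e, -, rfl⟩
      exact e.2
  · intro i
    let g : X → X := fun z => if hz : z ∈ U then (H.symm (⟨z, hz⟩, k.symm i) : X) else z
    have hg : ∀ z (hz : z ∈ U), g z = (H.symm (⟨z, hz⟩, k.symm i) : X) := fun z hz => dif_pos hz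
    refine ⟨⟨⟨σ, g, Subtype.val '' {e : σ ⁻¹' U | (H e).2 = k.symm i}, U, ?_, ?_, ?_, ?_⟩,
      hc.continuousOn, ?_⟩, rfl, rfl, fun _ _ => rfl⟩
    · rintro _ ⟨e, -, rfl⟩
      exact e.2
    · intro z hz
      rw [hg z hz]
      exact ⟨_, by simp, rfl⟩
    · rintro _ ⟨e, he, rfl⟩
      rw [hg _ e.2]
      have : ((⟨σ e, e.2⟩ : U), k.symm i) = H e :=
        Prod.ext (Subtype.ext (hH e).symm) he.symm
      rw [this, H.symm_apply_apply]
    · intro z hz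
      rw [hg z hz, ← hH, H.apply_symm_apply]
    · rw [continuousOn_iff_continuous_restrict]
      have : U.domRestrict g = fun z : U => (H.symm (z, k.symm i) : X) := by
        funext z
        exact hg z z.2
      rw [this]
      fun_prop
end
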